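/- (Harmonic measure upper bound on strip boundary) Let r ∈ (0,1), let I₀ ⊆ ℝ be an interval with 0 < |I₀| ≤ 1, and let Σ = {x + iy : x ∈ ℝ, |y| < r} \ I₀. If t ∈ Σ ∩ ℝ satisfies d(t, I₀) ≤ 1, then the harmonic measure μ_t^Σ of Σ centered at t satisfies, for its density with respect to arclength on the lines {Im z = ±r}: (dμ_t^Σ/dμ_L)(x ± ir) ≤ (2/r) e^{−d(x, I₀)} for all x ∈ ℝ. -/

import Mathlib

open MeasureTheory Set Filter

/-- A continuous function is harmonic on an open set `U ⊆ ℂ` if it satisfies the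
mean value property on all sufficiently small circles around each point of `U`. -/
def HarmonicOnSet (u : ℂ → ℝ) (U : Set ℂ) : Prop :=
  ContinuousOn u U ∧
  ∀ z ∈ U, ∀ᶠ ρ in nhdsWithin (0 : ℝ) (Set.Ioi (0 : ℝ)),
    u z = (2 * Real.pi)⁻¹ *
      ∫ θ in (0 : ℝ)..(2 * Real.pi), u (z + (Complex.ofReal ρ) * Complex.exp ((θ : ℂ) * Complex.I))

/-! The harmonic measure of a subdomain of the strip `|Im z| < r` is dominated, on the common
boundary, by that of the strip itself, whose density at `s ± i r` is an explicit Poisson kernel;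
from a real point `t` it equals `1 / (4 r cosh (π (t - s) / (2 r)))`. The kernel is singular on the
boundary of its own strip, so the comparison is made with the kernels of the wider strips
`|Im z| < π / (2 k)`, which are harmonic near the closed strip `|Im z| ≤ r`, and `k ↑ π / (2 r)` at
the end. A quadratic superharmonic barrier makes up for the unboundedness of the strip in the
maximum principle. -/

open InnerProductSpace Metric Real
open scoped ComplexConjugate Topology

section MeanValue

variable {u v : ℂ → ℝ} {U : Set ℂ} {z : ℂ}

theorem harmonicOnSet_iff :
    HarmonicOnSet u U ↔ ContinuousOn u U ∧ ∀ z ∈ U, ∀ᶠ ρ in 𝓝[>] (0 : ℝ),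
      u z = circleAverage u z ρ := Iff.rfl

theorem eventually_closedBall_subset_nhdsGT (hU : IsOpen U) (hz : z ∈ U) :
    ∀ᶠ ρ in 𝓝[>] (0 : ℝ), 0 < ρ ∧ closedBall z ρ ⊆ U :=
  eventually_mem_nhdsWithin.and
    ((eventually_closedBall_subset (hU.mem_nhds hz)).filter_mono nhdsWithin_le_nhds)

theorem eventually_circleIntegrable (hU : IsOpen U) (hu : ContinuousOn u U) (hz : z ∈ U) :
    ∀ᶠ ρ in 𝓝[>] (0 : ℝ), CircleIntegrable u z ρ := by
  filter_upwards [eventually_closedBall_subset_nhdsGT hU hz] with ρ ⟨hρ, hsub⟩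
  exact (hu.mono (sphere_subset_closedBall.trans hsub)).circleIntegrable hρ.le

theorem HarmonicOnSet.mono {V : Set ℂ} (hu : HarmonicOnSet u U) (h : V ⊆ U) : HarmonicOnSet u V :=
  ⟨hu.1.mono h, fun z hz ↦ hu.2 z (h hz)⟩

theorem HarmonicOnSet.sub (hU : IsOpen U) (hu : HarmonicOnSet u U) (hv : HarmonicOnSet v U) :
    HarmonicOnSet (fun z ↦ u z - v z) U := by
  refine harmonicOnSet_iff.2 ⟨hu.1.sub hv.1, fun z hz ↦ ?_⟩
  filter_upwards [(harmonicOnSet_iff.1 hu).2 z hz, (harmonicOnSet_iff.1 hv).2 z hz,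
    eventually_circleIntegrable hU hu.1 hz, eventually_circleIntegrable hU hv.1 hz]
    with ρ huρ hvρ hui hvi
  rw [circleAverage_fun_sub hui hvi, ← huρ, ← hvρ]

theorem integrable_circleMap_prod {X : Type*} [TopologicalSpace X] [T2Space X] [MeasurableSpace X]
    [OpensMeasurableSpace X] {μ : Measure X} [IsFiniteMeasureOnCompacts μ] [SFinite μ]
    {F : ℂ → X → ℝ} {K : Set X} (hK : IsCompact K) {ρ : ℝ} (hρ : 0 ≤ ρ)
    (hF : ContinuousOn (Function.uncurry F) (sphere z ρ ×ˢ K)) :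
    Integrable (Function.uncurry fun θ s ↦ F (circleMap z ρ θ) s)
      ((volume.restrict (uIoc 0 (2 * π))).prod (μ.restrict K)) := by
  have hcont : ContinuousOn (Function.uncurry fun θ s ↦ F (circleMap z ρ θ) s)
      (uIcc 0 (2 * π) ×ˢ K) :=
    hF.comp (f := fun p : ℝ × X ↦ (circleMap z ρ p.1, p.2)) (by fun_prop)
      fun p hp ↦ ⟨circleMap_mem_sphere z hρ p.1, hp.2⟩
  rw [Measure.prod_restrict]
  exact (hcont.integrableOn_compact (isCompact_uIcc.prod hK)).mono_set
    (prod_mono_left uIoc_subset_uIcc)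

theorem harmonicOnSet_integral {X : Type*} [TopologicalSpace X] [T2Space X] [MeasurableSpace X]
    [OpensMeasurableSpace X] {μ : Measure X} [IsFiniteMeasureOnCompacts μ] [SFinite μ]
    (hU : IsOpen U) {F : ℂ → X → ℝ} {K : Set X} (hK : IsCompact K)
    (hF : ContinuousOn (Function.uncurry F) (U ×ˢ univ)) (hF0 : ∀ z, ∀ s ∉ K, F z s = 0)
    (hFh : ∀ s, HarmonicOnNhd (fun z ↦ F z s) U) :
    HarmonicOnSet (fun z ↦ ∫ s, F z s ∂μ) U := by
  refine harmonicOnSet_iff.2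
    ⟨continuousOn_integral_of_compact_support hK hF fun z s _ ↦ hF0 z s, fun z hz ↦ ?_⟩
  filter_upwards [eventually_closedBall_subset_nhdsGT hU hz] with ρ ⟨hρ, hsub⟩
  have hint := integrable_circleMap_prod (μ := μ) (F := F) hK hρ.le
    (hF.mono (prod_mono (sphere_subset_closedBall.trans hsub) (subset_univ K)))
  have hmean (s : X) : circleAverage (fun w ↦ F w s) z ρ = F z s :=
    ((hFh s).mono (by rwa [abs_of_pos hρ])).circleAverage_eq
  calc ∫ s, F z s ∂μ = ∫ s in K, F z s ∂μ :=
        (setIntegral_eq_integral_of_forall_compl_eq_zero (hF0 z)).symm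
    _ = ∫ s in K, (2 * π)⁻¹ * (∫ θ in 0..2 * π, F (circleMap z ρ θ) s) ∂μ :=
        integral_congr_ae (.of_forall fun s ↦ (hmean s).symm)
    _ = (2 * π)⁻¹ * ∫ θ in 0..2 * π, ∫ s in K, F (circleMap z ρ θ) s ∂μ := by
        rw [integral_const_mul, intervalIntegral_integral_swap hint]
    _ = circleAverage (fun w ↦ ∫ s, F w s ∂μ) z ρ := by
        simp only [circleAverage, setIntegral_eq_integral_of_forall_compl_eq_zero (hF0 _),
          smul_eq_mul]

end MeanValue

section MaximumPrinciple

theorem le_of_frontier_le_of_lt_circleAverage {V : ℂ → ℝ} {U : Set ℂ} {M : ℝ} (hU : IsOpen U)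
    (hUb : Bornology.IsBounded U) (hV : ContinuousOn V (closure U))
    (hmean : ∀ z ∈ U, ∃ᶠ ρ in 𝓝[>] (0 : ℝ), V z < circleAverage V z ρ)
    (hM : ∀ z ∈ frontier U, V z ≤ M) {z : ℂ} (hz : z ∈ U) : V z ≤ M := by
  obtain ⟨w, hwU, hw⟩ := hUb.isCompact_closure.exists_isMaxOn ⟨z, subset_closure hz⟩ hV
  suffices w ∉ U from (hw (subset_closure hz)).trans (hM w (hU.frontier_eq ▸ ⟨hwU, this⟩))
  intro hwU'
  obtain ⟨ρ, hlt, hint, hρ, hsub⟩ := ((hmean w hwU').and_eventually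
    ((eventually_circleIntegrable hU (hV.mono subset_closure) hwU').and
      (eventually_closedBall_subset_nhdsGT hU hwU'))).exists
  refine hlt.not_ge (circleAverage_mono_on_of_le_circle hint fun x hx ↦ hw (subset_closure ?_))
  rw [abs_of_pos hρ] at hx
  exact hsub (sphere_subset_closedBall hx)

/-- The Phragmén–Lindelöf barrier of the strip `|Im z| ≤ r`: strictly superharmonic, nonnegative
on the strip and growing like `(Re z)²` at infinity. -/
def stripBarrier (r : ℝ) (z : ℂ) : ℝ := z.re ^ 2 - 2 * z.im ^ 2 + 2 * r ^ 2

theorem continuous_stripBarrier (r : ℝ) : Continuous (stripBarrier r) := by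
  unfold stripBarrier
  fun_prop

theorem re_sq_le_stripBarrier {r : ℝ} {z : ℂ} (hz : |z.im| ≤ r) : z.re ^ 2 ≤ stripBarrier r z := by
  have : z.im ^ 2 ≤ r ^ 2 := sq_le_sq' (abs_le.1 hz).1 (abs_le.1 hz).2
  simp only [stripBarrier]
  linarith

theorem circleAverage_stripBarrier (r : ℝ) (z : ℂ) (ρ : ℝ) :
    circleAverage (stripBarrier r) z ρ = stripBarrier r z - ρ ^ 2 / 2 := by
  have hexpand (θ : ℝ) : stripBarrier r (circleMap z ρ θ) =
      stripBarrier r z + 2 * z.re * ρ * cos θ - 4 * z.im * ρ * sin θ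
        + ρ ^ 2 * cos θ ^ 2 - 2 * ρ ^ 2 * sin θ ^ 2 := by
    simp only [stripBarrier, circleMap, Complex.add_re, Complex.add_im, Complex.re_ofReal_mul,
      Complex.im_ofReal_mul, Complex.exp_ofReal_mul_I_re, Complex.exp_ofReal_mul_I_im]
    ring
  simp_rw [circleAverage, hexpand]
  rw [intervalIntegral.integral_sub, intervalIntegral.integral_add, intervalIntegral.integral_sub,
    intervalIntegral.integral_add]
  · simp only [intervalIntegral.integral_const, intervalIntegral.integral_const_mul, integral_cos,
      integral_sin, integral_cos_sq, integral_sin_sq, sin_two_pi, sin_zero, cos_two_pi, cos_zero,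
      smul_eq_mul]
    field_simp
    ring
  all_goals exact Continuous.intervalIntegrable (by fun_prop) _ _

variable {W : ℂ → ℝ} {S : Set ℂ} {r M : ℝ}

theorem HarmonicOnSet.lt_circleAverage_sub_stripBarrier (hS : IsOpen S) (hW : HarmonicOnSet W S)
    {ε : ℝ} (hε : 0 < ε) {z : ℂ} (hz : z ∈ S) :
    ∀ᶠ ρ in 𝓝[>] (0 : ℝ), W z - ε * stripBarrier r z <
      circleAverage (fun w ↦ W w - ε * stripBarrier r w) z ρ := by
  filter_upwards [(harmonicOnSet_iff.1 hW).2 z hz, eventually_circleIntegrable hS hW.1 hz,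
    self_mem_nhdsWithin] with ρ hmean hint (hρ : 0 < ρ)
  have hB : CircleIntegrable (fun w ↦ ε * stripBarrier r w) z ρ :=
    ((continuous_stripBarrier r).const_mul ε).continuousOn.circleIntegrable hρ.le
  have hBavg : circleAverage (fun w ↦ ε * stripBarrier r w) z ρ =
      ε * (stripBarrier r z - ρ ^ 2 / 2) := by
    rw [← circleAverage_stripBarrier]
    exact circleAverage_fun_smul (a := ε) (f := stripBarrier r)
  rw [circleAverage_fun_sub hint hB, ← hmean, hBavg]
  have : 0 < ε * ρ ^ 2 := by positivity
  linarith

theorem HarmonicOnSet.le_add_mul_stripBarrier (hS : IsOpen S) (hSr : S ⊆ {z | |z.im| ≤ r})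
    (hW : HarmonicOnSet W S) (hWc : ContinuousOn W (closure S)) (hWb : BddAbove (W '' closure S))
    (hM : ∀ z ∈ frontier S, W z ≤ M) {ε : ℝ} (hε : 0 < ε) {z : ℂ} (hz : z ∈ S) :
    W z ≤ M + ε * stripBarrier r z := by
  obtain ⟨C, hC⟩ := hWb
  obtain ⟨R, hRC, hzR⟩ : ∃ R, C - M ≤ ε * R ^ 2 ∧ |z.re| < R :=
    ((((tendsto_pow_atTop two_ne_zero).const_mul_atTop hε).eventually_ge_atTop (C - M)).and
      (eventually_gt_atTop |z.re|)).exists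
  have hclS : closure S ⊆ {z | |z.im| ≤ r} :=
    closure_minimal hSr (isClosed_le (by fun_prop) continuous_const)
  have hV : ContinuousOn (fun w ↦ W w - ε * stripBarrier r w) (closure S) :=
    hWc.sub ((continuous_stripBarrier r).const_mul ε).continuousOn
  have hT : IsOpen {w : ℂ | |w.re| < R} := isOpen_lt (by fun_prop) continuous_const
  have hb : Bornology.IsBounded (S ∩ {w : ℂ | |w.re| < R}) :=
    (isCompact_Icc.reProdIm isCompact_Icc).isBounded.subset
      fun w hw ↦ ⟨abs_le.1 hw.2.le, abs_le.1 (hSr hw.1)⟩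
  rw [← sub_le_iff_le_add]
  refine le_of_frontier_le_of_lt_circleAverage (hS.inter hT) hb
    (hV.mono (closure_mono inter_subset_left))
    (fun w hw ↦ (hW.lt_circleAverage_sub_stripBarrier hS hε hw.1).frequently) ?_
    (z := z) ⟨hz, hzR⟩
  intro w hw
  rcases frontier_inter_subset _ _ hw with ⟨hwS, -⟩ | ⟨hwS, hwR⟩
  · have hB : 0 ≤ stripBarrier r w :=
      (sq_nonneg _).trans (re_sq_le_stripBarrier (hclS hwS.1))
    linarith [hM w hwS, mul_nonneg hε.le hB]
  · have hre : |w.re| = R := frontier_lt_subset_eq (f := fun w : ℂ ↦ |w.re|)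
      (by fun_prop) continuous_const hwR
    have hB : R ^ 2 ≤ stripBarrier r w := by
      rw [← hre, sq_abs]
      exact re_sq_le_stripBarrier (hclS hwS)
    linarith [hC (mem_image_of_mem W hwS), mul_le_mul_of_nonneg_left hB hε.le]

theorem HarmonicOnSet.le_of_frontier_le_of_strip (hS : IsOpen S) (hSr : S ⊆ {z | |z.im| ≤ r})
    (hW : HarmonicOnSet W S) (hWc : ContinuousOn W (closure S)) (hWb : BddAbove (W '' closure S))
    (hM : ∀ z ∈ frontier S, W z ≤ M) {z : ℂ} (hz : z ∈ S) : W z ≤ M := by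
  have hlim : Tendsto (fun ε ↦ M + ε * stripBarrier r z) (𝓝[>] 0) (𝓝 M) :=
    (Continuous.tendsto' (by fun_prop) 0 M (by simp)).mono_left nhdsWithin_le_nhds
  refine ge_of_tendsto hlim ?_
  filter_upwards [self_mem_nhdsWithin] with ε hε
  exact hW.le_add_mul_stripBarrier hS hSr hWc hWb hM hε hz

end MaximumPrinciple

section StripKernel

/-- The Poisson kernel of the strip `|Im z| < π / (2 |k|)` at the boundary point `s + i π / (2 k)`,
which lies on the upper line if `0 < k` and on the lower one if `k < 0`: the pullback of the
Poisson kernel of the half-plane under `z ↦ i exp (k z)`. -/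
noncomputable def stripKernel (k : ℝ) (z : ℂ) (s : ℝ) : ℝ :=
  |k| / (2 * π) * (cos (k * z.im) / (cosh (k * (z.re - s)) - sin (k * z.im)))

variable {k : ℝ} {z : ℂ}

theorem stripKernel_neg (k : ℝ) (z : ℂ) (s : ℝ) :
    stripKernel (-k) z s = stripKernel k (conj z) s := by
  simp [stripKernel]

theorem cosh_sub_sin_pos {x y : ℝ} (hy : |y| < π / 2) : 0 < cosh x - sin y := by
  have hcos := cos_pos_of_mem_Ioo (abs_lt.1 hy)
  have hsin : sin y < 1 := by nlinarith [sin_sq_add_cos_sq y]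
  linarith [one_le_cosh x]

theorem stripKernel_nonneg (hz : |k * z.im| < π / 2) (s : ℝ) : 0 ≤ stripKernel k z s := by
  have hcos := cos_pos_of_mem_Ioo (abs_lt.1 hz)
  have hden := cosh_sub_sin_pos (x := k * (z.re - s)) hz
  unfold stripKernel
  positivity

theorem continuousOn_stripKernel :
    ContinuousOn (fun p : (ℝ × ℂ) × ℝ ↦ stripKernel p.1.1 p.1.2 p.2)
      ({p | |p.1 * p.2.im| < π / 2} ×ˢ univ) := by
  unfold stripKernel
  exact ContinuousOn.mul (by fun_prop)
    (.div (by fun_prop) (by fun_prop) fun p hp ↦ (cosh_sub_sin_pos hp.1).ne')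

theorem continuous_stripKernel (hz : |k * z.im| < π / 2) : Continuous (stripKernel k z) :=
  continuousOn_stripKernel.comp_continuous (f := fun s : ℝ ↦ ((k, z), s)) (by fun_prop)
    fun _ ↦ ⟨hz, mem_univ _⟩

theorem two_mul_exp_mul_cosh_sub (x a : ℝ) :
    2 * exp x * (cosh x - a) = exp x ^ 2 - 2 * exp x * a + 1 := by
  have hexp : exp x * exp (-x) = 1 := by rw [← exp_add, add_neg_cancel, exp_zero]
  rw [cosh_eq]
  linear_combination hexp

theorem stripKernel_eq_re (k : ℝ) (z : ℂ) (s : ℝ) :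
    stripKernel k z s =
      (((|k| / π : ℝ) : ℂ) * (Complex.exp (k * (z - s)) - Complex.I)⁻¹).re := by
  set x := k * (z.re - s)
  set y := k * z.im
  have hexp : Complex.exp (k * (z - s)) = ⟨exp x * cos y, exp x * sin y⟩ := by
    apply Complex.ext <;> simp [Complex.exp_re, Complex.exp_im, x, y]
  have hnormSq : Complex.normSq (Complex.exp (k * (z - s)) - Complex.I) =
      exp x * (2 * (cosh x - sin y)) := by
    simp only [hexp, Complex.normSq_apply, Complex.sub_re, Complex.sub_im, Complex.I_re,
      Complex.I_im]
    linear_combination exp x ^ 2 * sin_sq_add_cos_sq y - two_mul_exp_mul_cosh_sub x (sin y)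
  calc stripKernel k z s = |k| / (2 * π) * (cos y / (cosh x - sin y)) := rfl
    _ = |k| / π * (cos y / (2 * (cosh x - sin y))) := by
      rw [div_mul_div_comm, div_mul_div_comm, mul_assoc, mul_left_comm]
    _ = |k| / π * (exp x * cos y / (exp x * (2 * (cosh x - sin y)))) := by
      rw [mul_div_mul_left _ _ (exp_pos x).ne']
    _ = _ := by
      rw [Complex.re_ofReal_mul, Complex.inv_re, hnormSq, hexp, Complex.sub_re, Complex.I_re,
        sub_zero]

theorem harmonicOnNhd_stripKernel (k s : ℝ) :
    HarmonicOnNhd (fun z ↦ stripKernel k z s) {z | |k * z.im| < π / 2} := by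
  intro z hz
  simp_rw [stripKernel_eq_re]
  refine AnalyticAt.harmonicAt_re (analyticAt_const.mul (AnalyticAt.inv (by fun_prop) fun h ↦ ?_))
  have hre := congrArg Complex.re h
  simp [Complex.exp_re, (cos_pos_of_mem_Ioo (abs_lt.1 hz)).ne'] at hre

/-- The harmonic measure, in the strip `|Im z| < π / (2 |k|)` and seen from a point at height `y`,
of the boundary segment of radius `τ` about the nearest point of the line `Im z = π / (2 k)`. -/
noncomputable def stripMass (k y τ : ℝ) : ℝ :=
  (arctan ((exp (|k| * τ) - sin (k * y)) / cos (k * y)) -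
    arctan ((exp (-(|k| * τ)) - sin (k * y)) / cos (k * y))) / π

theorem stripMass_le_one (k y τ : ℝ) : stripMass k y τ ≤ 1 := by
  rw [stripMass, div_le_one pi_pos]
  linarith [arctan_lt_pi_div_two ((exp (|k| * τ) - sin (k * y)) / cos (k * y)),
    neg_pi_div_two_lt_arctan ((exp (-(|k| * τ)) - sin (k * y)) / cos (k * y))]

theorem hasDerivAt_arctan_exp_sub_sin (hz : |k * z.im| < π / 2) (s : ℝ) :
    HasDerivAt (fun s ↦ arctan ((exp (|k| * (s - z.re)) - sin (k * z.im)) / cos (k * z.im)) / π)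
      (stripKernel k z s) s := by
  have hcos := cos_pos_of_mem_Ioo (abs_lt.1 hz)
  have hden := cosh_sub_sin_pos (x := |k| * (s - z.re)) hz
  have h := ((((((hasDerivAt_id s).sub_const z.re).const_mul |k|).exp.sub_const
    (sin (k * z.im))).div_const (cos (k * z.im))).arctan).div_const π
  have hcosh : cosh (k * (z.re - s)) = cosh (|k| * (s - z.re)) := by
    rw [← cosh_abs, abs_mul, abs_sub_comm, ← cosh_abs (|k| * (s - z.re)), abs_mul, abs_abs]
  convert! h using 1
  rw [stripKernel, hcosh]
  simp only [id]
  have hsq : cos (k * z.im) ^ 2 +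
      (exp (|k| * (s - z.re)) - sin (k * z.im)) ^ 2 =
      2 * exp (|k| * (s - z.re)) * (cosh (|k| * (s - z.re)) - sin (k * z.im)) := by
    linear_combination sin_sq_add_cos_sq (k * z.im) -
      two_mul_exp_mul_cosh_sub (|k| * (s - z.re)) (sin (k * z.im))
  have hsec : 1 + ((exp (|k| * (s - z.re)) - sin (k * z.im)) / cos (k * z.im)) ^ 2 =
      2 * exp (|k| * (s - z.re)) * (cosh (|k| * (s - z.re)) - sin (k * z.im)) /
        cos (k * z.im) ^ 2 := by
    rw [← hsq]
    field_simp
  rw [hsec]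
  field_simp

theorem integral_stripKernel (hz : |k * z.im| < π / 2) (τ : ℝ) :
    ∫ s in (z.re - τ)..(z.re + τ), stripKernel k z s = stripMass k z.im τ := by
  rw [intervalIntegral.integral_eq_sub_of_hasDerivAt
    (fun s _ ↦ hasDerivAt_arctan_exp_sub_sin hz s)
    ((continuous_stripKernel hz).intervalIntegrable _ _), ← sub_div, stripMass]
  congr 6 <;> ring

theorem tendsto_mul_nhdsLT_pi_div_two {r : ℝ} (hr : 0 < r) :
    Tendsto (fun k ↦ k * r) (𝓝[<] (π / (2 * r))) (𝓝[<] (π / 2)) := by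
  have hr' : π / (2 * r) * r = π / 2 := by field_simp
  refine tendsto_nhdsWithin_iff.2
    ⟨((continuous_mul_const r).tendsto' _ _ hr').mono_left nhdsWithin_le_nhds, ?_⟩
  filter_upwards [self_mem_nhdsWithin] with k hk
  exact (mul_lt_mul_of_pos_right hk hr).trans_eq hr'

theorem eventually_pos_and_mul_lt_pi_div_two {r : ℝ} (hr : 0 < r) :
    ∀ᶠ k in 𝓝[<] (π / (2 * r)), 0 < k ∧ k * r < π / 2 := by
  have hpos : 0 < π / (2 * r) := by positivity
  exact (eventually_nhdsWithin_of_eventually_nhds (lt_mem_nhds hpos)).and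
    ((tendsto_mul_nhdsLT_pi_div_two hr).eventually self_mem_nhdsWithin)

theorem tendsto_inv_cos_mul_atTop {r : ℝ} (hr : 0 < r) :
    Tendsto (fun k ↦ (cos (k * r))⁻¹) (𝓝[<] (π / (2 * r))) atTop :=
  tendsto_inv_nhdsGT_zero.comp (tendsto_cos_pi_div_two.comp (tendsto_mul_nhdsLT_pi_div_two hr))

theorem tendsto_stripMass {r τ : ℝ} (hr : 0 < r) (hτ : 0 < τ) :
    Tendsto (fun k ↦ stripMass k r τ) (𝓝[<] (π / (2 * r))) (𝓝 1) := by
  have hk₀ : 0 < π / (2 * r) * τ := by positivity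
  have hsin : sin (π / (2 * r) * r) = 1 := by
    rw [← sin_pi_div_two]
    congr 1
    field_simp
  have hnum (c : ℝ) : Tendsto (fun k ↦ exp (|k| * c) - sin (k * r)) (𝓝[<] (π / (2 * r)))
      (𝓝 (exp (π / (2 * r) * c) - 1)) := by
    refine (Continuous.tendsto' (by fun_prop) _ _ ?_).mono_left nhdsWithin_le_nhds
    rw [hsin, abs_of_pos (by positivity)]
  have hpos := (tendsto_arctan_atTop.mono_right nhdsWithin_le_nhds).comp
    ((hnum τ).pos_mul_atTop (sub_pos.2 (one_lt_exp_iff.2 hk₀)) (tendsto_inv_cos_mul_atTop hr))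
  have hneg := (tendsto_arctan_atBot.mono_right nhdsWithin_le_nhds).comp
    ((hnum (-τ)).neg_mul_atTop (sub_neg.2 (exp_lt_one_iff.2 (by linarith)))
      (tendsto_inv_cos_mul_atTop hr))
  convert! (hpos.sub hneg).div_const π using 2
  · simp only [stripMass, Function.comp_apply, div_eq_mul_inv, mul_neg]
  · field_simp
    ring

theorem inv_cosh_le (x : ℝ) : (cosh x)⁻¹ ≤ 2 * exp (-|x|) := by
  rw [exp_neg, ← div_eq_mul_inv, inv_le_comm₀ (cosh_pos x) (by positivity), inv_div, ← cosh_abs,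
    cosh_eq]
  linarith [exp_pos (-|x|)]

theorem stripKernel_ofReal_le (k t s : ℝ) :
    stripKernel k t s ≤ |k| / π * exp (-(|k| * |t - s|)) := by
  calc stripKernel k t s = |k| / (2 * π) * (cosh (k * (t - s)))⁻¹ := by simp [stripKernel]
    _ ≤ |k| / (2 * π) * (2 * exp (-|k * (t - s)|)) := by gcongr; exact inv_cosh_le _
    _ = |k| / π * exp (-(|k| * |t - s|)) := by rw [abs_mul]; field_simp

theorem stripKernel_ofReal_le_exp_infDist (hk : 1 ≤ |k|) (E : Set ℝ) (t s : ℝ) :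
    stripKernel k t s ≤ |k| / π * exp (infDist t E) * exp (-infDist s E) := by
  have hdist : infDist s E ≤ infDist t E + |k| * |t - s| := by
    calc infDist s E ≤ infDist t E + dist s t := infDist_le_infDist_add_dist
      _ ≤ infDist t E + |k| * |t - s| := by
        rw [dist_comm, Real.dist_eq]
        gcongr
        exact le_mul_of_one_le_left (abs_nonneg _) hk
  rw [mul_assoc, ← exp_add]
  refine (stripKernel_ofReal_le k t s).trans ?_
  gcongr
  linarith

end StripKernel

section StripExtension

/-- The Poisson extension to the strip `|Im z| < π / (2 |k|)` of the datum `f` on the boundary line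
`Im z = π / (2 k)` and `0` on the opposite line. -/
noncomputable def stripExtension (k : ℝ) (f : ℝ → ℝ) (z : ℂ) : ℝ :=
  ∫ s, f s * stripKernel k z s

variable {f : ℝ → ℝ} {k : ℝ} {z : ℂ}

theorem stripExtension_neg (k : ℝ) (f : ℝ → ℝ) (z : ℂ) :
    stripExtension (-k) f z = stripExtension k f (conj z) := by
  simp only [stripExtension, stripKernel_neg]

theorem stripExtension_nonneg (hf : 0 ≤ f) (hz : |k * z.im| < π / 2) : 0 ≤ stripExtension k f z :=
  integral_nonneg fun s ↦ mul_nonneg (hf s) (stripKernel_nonneg hz s)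

theorem integrable_mul_stripKernel (hf : Continuous f) (hfs : HasCompactSupport f)
    (hz : |k * z.im| < π / 2) : Integrable fun s ↦ f s * stripKernel k z s :=
  (hf.mul (continuous_stripKernel hz)).integrable_of_hasCompactSupport hfs.mul_right

theorem continuousOn_stripExtension (hf : Continuous f) (hfs : HasCompactSupport f) :
    ContinuousOn (fun p : ℝ × ℂ ↦ stripExtension p.1 f p.2) {p | |p.1 * p.2.im| < π / 2} :=
  continuousOn_integral_of_compact_support (f := fun (p : ℝ × ℂ) s ↦ f s * stripKernel p.1 p.2 s)
    hfs (.mul (by fun_prop) continuousOn_stripKernel)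
    fun _ _ _ hs ↦ by rw [image_eq_zero_of_notMem_tsupport hs, zero_mul]

theorem harmonicOnSet_stripExtension (k : ℝ) (hf : Continuous f) (hfs : HasCompactSupport f) :
    HarmonicOnSet (stripExtension k f) {z | |k * z.im| < π / 2} := by
  refine harmonicOnSet_integral (isOpen_lt (by fun_prop) continuous_const) hfs ?_
    (fun z s hs ↦ by rw [image_eq_zero_of_notMem_tsupport hs, zero_mul])
    fun s z hz ↦ (harmonicOnNhd_stripKernel k s z hz).const_smul (c := f s)
  exact .mul (by fun_prop) (continuousOn_stripKernel.comp
    (f := fun p : ℂ × ℝ ↦ ((k, p.1), p.2)) (by fun_prop) fun p hp ↦ hp)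

theorem continuousAt_stripExtension_left (hf : Continuous f) (hfs : HasCompactSupport f)
    (hz : |k * z.im| < π / 2) : ContinuousAt (fun κ ↦ stripExtension κ f z) k := by
  have hopen : IsOpen {p : ℝ × ℂ | |p.1 * p.2.im| < π / 2} :=
    isOpen_lt (by fun_prop) continuous_const
  exact ((continuousOn_stripExtension hf hfs).continuousAt (hopen.mem_nhds hz)).comp
    (f := fun κ : ℝ ↦ (κ, z)) (by fun_prop)

theorem mul_stripMass_le_stripExtension (hf : Continuous f) (hfs : HasCompactSupport f)
    (hf0 : 0 ≤ f) (hz : |k * z.im| < π / 2) {τ m : ℝ} (hτ : 0 ≤ τ)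
    (hm : ∀ s ∈ Icc (z.re - τ) (z.re + τ), m ≤ f s) :
    m * stripMass k z.im τ ≤ stripExtension k f z := by
  have hcont := continuous_stripKernel hz
  calc m * stripMass k z.im τ = ∫ s in (z.re - τ)..(z.re + τ), m * stripKernel k z s := by
        rw [intervalIntegral.integral_const_mul, integral_stripKernel hz]
    _ ≤ ∫ s in (z.re - τ)..(z.re + τ), f s * stripKernel k z s :=
        intervalIntegral.integral_mono_on (by linarith)
          ((hcont.const_mul m).intervalIntegrable _ _) ((hf.mul hcont).intervalIntegrable _ _)
          fun s hs ↦ mul_le_mul_of_nonneg_right (hm s hs) (stripKernel_nonneg hz s)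
    _ ≤ stripExtension k f z := by
        rw [intervalIntegral.integral_of_le (by linarith)]
        exact setIntegral_le_integral (integrable_mul_stripKernel hf hfs hz)
          (.of_forall fun s ↦ mul_nonneg (hf0 s) (stripKernel_nonneg hz s))

theorem eventually_sub_le_stripExtension (hf : Continuous f) (hfs : HasCompactSupport f)
    (hf0 : 0 ≤ f) {r ε : ℝ} (hr : 0 < r) (hε : 0 < ε) :
    ∀ᶠ k in 𝓝[<] (π / (2 * r)), ∀ z : ℂ, z.im = r → f z.re - ε ≤ stripExtension k f z := by
  obtain ⟨δ, hδ, hfδ⟩ := Metric.uniformContinuous_iff.1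
    (hfs.uniformContinuous_of_continuous hf) (ε / 2) (half_pos hε)
  obtain ⟨G, hG⟩ := hfs.exists_bound_of_continuous hf
  have hlim : Tendsto (fun k ↦ G * (1 - stripMass k r (δ / 2))) (𝓝[<] (π / (2 * r))) (𝓝 0) := by
    simpa using ((tendsto_stripMass hr (half_pos hδ)).const_sub 1).const_mul G
  filter_upwards [hlim.eventually_lt_const (half_pos hε),
    eventually_pos_and_mul_lt_pi_div_two hr] with k hmass ⟨hk, hkr⟩ z rfl
  have hnear : ∀ s ∈ Icc (z.re - δ / 2) (z.re + δ / 2), f z.re - ε / 2 ≤ f s := by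
    intro s hs
    have hsδ : dist z.re s < δ := by
      rw [Real.dist_eq, abs_lt]
      constructor <;> linarith [hs.1, hs.2]
    linarith [(abs_lt.1 (hfδ hsδ)).2]
  refine le_trans ?_ (mul_stripMass_le_stripExtension hf hfs hf0
    (by rwa [abs_of_pos (mul_pos hk hr)]) (half_pos hδ).le hnear)
  have hle := sub_nonneg.2 (stripMass_le_one k z.im (δ / 2))
  have hfG : f z.re * (1 - stripMass k z.im (δ / 2)) ≤ G * (1 - stripMass k z.im (δ / 2)) :=
    mul_le_mul_of_nonneg_right ((le_abs_self _).trans (hG z.re)) hle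
  linarith [mul_nonneg hε.le hle]

end StripExtension

section Comparison

variable {u : ℂ → ℝ} {S : Set ℂ} {fp fm : ℝ → ℝ}

theorem HarmonicOnSet.le_stripExtension_add {k ε : ℝ} (hS : IsOpen S) {r : ℝ}
    (hSr : S ⊆ {z | |z.im| ≤ r}) (hkr : |k| * r < π / 2) (hu : HarmonicOnSet u S)
    (huc : ContinuousOn u (closure S)) (hub : BddAbove (u '' closure S))
    (hfp : Continuous fp) (hfps : HasCompactSupport fp) (hfp0 : 0 ≤ fp)
    (hfm : Continuous fm) (hfms : HasCompactSupport fm) (hfm0 : 0 ≤ fm)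
    (hfr : ∀ z ∈ frontier S, u z ≤ stripExtension k fp z + stripExtension (-k) fm z + ε)
    {z : ℂ} (hz : z ∈ S) : u z ≤ stripExtension k fp z + stripExtension (-k) fm z + ε := by
  have hstrip (κ : ℝ) (hκ : |κ| = |k|) : closure S ⊆ {z | |κ * z.im| < π / 2} := by
    have hclS : closure S ⊆ {z | |z.im| ≤ r} :=
      closure_minimal hSr (isClosed_le (by fun_prop) continuous_const)
    intro w hw
    change |κ * w.im| < π / 2
    rw [abs_mul, hκ]
    exact (mul_le_mul_of_nonneg_left (hclS hw) (abs_nonneg k)).trans_lt hkr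
  have hEp := (harmonicOnSet_stripExtension k hfp hfps).mono (hstrip k rfl)
  have hEm := (harmonicOnSet_stripExtension (-k) hfm hfms).mono (hstrip (-k) (abs_neg k))
  have hbdd : BddAbove
      ((fun w ↦ u w - stripExtension k fp w - stripExtension (-k) fm w) '' closure S) := by
    obtain ⟨C, hC⟩ := hub
    refine ⟨C, forall_mem_image.2 fun w hw ↦ ?_⟩
    linarith [hC (mem_image_of_mem u hw), stripExtension_nonneg hfp0 (hstrip k rfl hw),
      stripExtension_nonneg hfm0 (hstrip (-k) (abs_neg k) hw)]
  have hW := (hu.sub hS (hEp.mono subset_closure)).sub hS (hEm.mono subset_closure)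
  have hmax := hW.le_of_frontier_le_of_strip (M := ε) hS hSr ((huc.sub hEp.1).sub hEm.1) hbdd
    (fun w hw ↦ by linarith [hfr w hw]) hz
  linarith

theorem eventually_le_stripExtension_add {r ε : ℝ} (hr : 0 < r) (hε : 0 < ε) {F : Set ℂ}
    (hF : F ⊆ {z | |z.im| ≤ r})
    (hfp : Continuous fp) (hfps : HasCompactSupport fp) (hfp0 : 0 ≤ fp)
    (hfm : Continuous fm) (hfms : HasCompactSupport fm) (hfm0 : 0 ≤ fm)
    (hup : ∀ z ∈ F, z.im = r → u z ≤ fp z.re) (hum : ∀ z ∈ F, z.im = -r → u z ≤ fm z.re)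
    (hu0 : ∀ z ∈ F, |z.im| < r → u z ≤ 0) :
    ∀ᶠ k in 𝓝[<] (π / (2 * r)),
      ∀ z ∈ F, u z ≤ stripExtension k fp z + stripExtension (-k) fm z + ε := by
  filter_upwards [eventually_sub_le_stripExtension hfp hfps hfp0 hr hε,
    eventually_sub_le_stripExtension hfm hfms hfm0 hr hε, eventually_pos_and_mul_lt_pi_div_two hr]
    with k hkp hkm ⟨hk, hkr⟩ z hz
  have hzr : |z.im| ≤ r := hF hz
  have hkz : |k * z.im| < π / 2 := by
    rw [abs_mul, abs_of_pos hk]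
    exact (mul_le_mul_of_nonneg_left hzr hk.le).trans_lt hkr
  have hEp : 0 ≤ stripExtension k fp z := stripExtension_nonneg hfp0 hkz
  have hEm : 0 ≤ stripExtension (-k) fm z :=
    stripExtension_nonneg hfm0 (by rwa [neg_mul, abs_neg])
  rcases hzr.lt_or_eq with hlt | heq
  · linarith [hu0 z hz hlt]
  rcases eq_or_eq_neg_of_abs_eq heq with him | him
  · linarith [hup z hz him, hkp z him]
  · have hconj := hkm (conj z) (by rw [Complex.conj_im, him, neg_neg])
    rw [Complex.conj_re, ← stripExtension_neg] at hconj
    linarith [hum z hz him]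

theorem HarmonicOnSet.le_stripExtension {r : ℝ} (hr : 0 < r) (hS : IsOpen S)
    (hSr : S ⊆ {z | |z.im| < r}) (hu : HarmonicOnSet u S)
    (huc : ContinuousOn u (closure S)) (hub : BddAbove (u '' closure S))
    (hfp : Continuous fp) (hfps : HasCompactSupport fp) (hfp0 : 0 ≤ fp)
    (hfm : Continuous fm) (hfms : HasCompactSupport fm) (hfm0 : 0 ≤ fm)
    (hup : ∀ z ∈ frontier S, z.im = r → u z ≤ fp z.re)
    (hum : ∀ z ∈ frontier S, z.im = -r → u z ≤ fm z.re)
    (hu0 : ∀ z ∈ frontier S, |z.im| < r → u z ≤ 0) {z : ℂ} (hz : z ∈ S) :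
    u z ≤ stripExtension (π / (2 * r)) fp z + stripExtension (-(π / (2 * r))) fm z := by
  have hSr' : S ⊆ {z | |z.im| ≤ r} := hSr.trans fun w (hw : |w.im| < r) ↦ hw.le
  have hfr : frontier S ⊆ {z | |z.im| ≤ r} := frontier_subset_closure.trans
    (closure_minimal hSr' (isClosed_le (by fun_prop) continuous_const))
  have hzr : |z.im| < r := hSr hz
  have hzk : |π / (2 * r) * z.im| < π / 2 := by
    calc |π / (2 * r) * z.im| = π / (2 * r) * |z.im| := by
          rw [abs_mul, abs_of_pos (by positivity)]
      _ < π / (2 * r) * r := by gcongr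
      _ = π / 2 := by field_simp
  have hlim : Tendsto (fun k ↦ stripExtension k fp z + stripExtension (-k) fm z)
      (𝓝[<] (π / (2 * r)))
      (𝓝 (stripExtension (π / (2 * r)) fp z + stripExtension (-(π / (2 * r))) fm z)) := by
    have hp := continuousAt_stripExtension_left hfp hfps hzk
    have hm := (continuousAt_stripExtension_left (k := -(π / (2 * r))) hfm hfms
      (by rwa [neg_mul, abs_neg])).comp (f := Neg.neg) continuous_neg.continuousAt
    exact (hp.add hm).tendsto.mono_left nhdsWithin_le_nhds
  refine le_of_forall_pos_le_add fun ε hε ↦ ge_of_tendsto (hlim.add_const ε) ?_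
  filter_upwards [eventually_le_stripExtension_add hr hε hfr hfp hfps hfp0 hfm hfms hfm0 hup hum
    hu0, eventually_pos_and_mul_lt_pi_div_two hr] with k hk ⟨hk0, hkr⟩
  exact hu.le_stripExtension_add hS hSr' (by rwa [abs_of_pos hk0]) huc hub hfp hfps hfp0 hfm hfms
    hfm0 hk hz

end Comparison

section SlitStrip

/-- The strip `|Im z| < r` slit along the subset `E` of the real axis. -/
def slitStrip (r : ℝ) (E : Set ℝ) : Set ℂ := {z | |z.im| < r} \ (Complex.ofReal '' E)

variable {r t : ℝ} {E : Set ℝ}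

theorem isOpen_slitStrip (hE : IsClosed E) : IsOpen (slitStrip r E) :=
  (isOpen_lt (by fun_prop) continuous_const).sdiff
    (Complex.isometry_ofReal.isClosedEmbedding.isClosedMap E hE)

theorem mem_image_ofReal_of_mem_frontier_slitStrip (hE : IsClosed E) {z : ℂ}
    (hz : z ∈ frontier (slitStrip r E)) (hzr : |z.im| < r) : z ∈ Complex.ofReal '' E := by
  rw [(isOpen_slitStrip hE).frontier_eq] at hz
  by_contra h
  exact hz.2 ⟨hzr, h⟩

theorem integrable_mul_exp_neg_infDist {f : ℝ → ℝ} (hf : Continuous f)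
    (hfs : HasCompactSupport f) (C : ℝ) (E : Set ℝ) :
    Integrable fun x ↦ f x * (C * exp (-infDist x E)) :=
  (hf.mul ((continuous_infDist_pt E).neg.rexp.const_mul C)).integrable_of_hasCompactSupport
    hfs.mul_right

theorem stripExtension_ofReal_le {k : ℝ} {f : ℝ → ℝ} (hf : Continuous f)
    (hfs : HasCompactSupport f) (hf0 : 0 ≤ f) (hk : 1 ≤ |k|) (E : Set ℝ) (t : ℝ) :
    stripExtension k f t ≤ ∫ x, f x * (|k| / π * exp (infDist t E) * exp (-infDist x E)) :=
  integral_mono (integrable_mul_stripKernel hf hfs (by simp [pi_pos]))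
    (integrable_mul_exp_neg_infDist hf hfs _ E) fun x ↦
      mul_le_mul_of_nonneg_left (stripKernel_ofReal_le_exp_infDist hk E t x) (hf0 x)

theorem integral_mul_const_mul_mono {X : Type*} [MeasurableSpace X] {μ : Measure X} {f g : X → ℝ}
    (hf : 0 ≤ f) (hg : 0 ≤ g) {C D : ℝ} (hCD : C ≤ D) :
    ∫ x, f x * (C * g x) ∂μ ≤ ∫ x, f x * (D * g x) ∂μ := by
  simp_rw [mul_left_comm, integral_const_mul]
  exact mul_le_mul_of_nonneg_right hCD (integral_nonneg fun x ↦ mul_nonneg (hf x) (hg x))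

theorem exp_div_two_mul_le {d : ℝ} (hd : d ≤ 1) (hr : 0 < r) : exp d / (2 * r) ≤ 2 / r := by
  rw [div_le_div_iff₀ (by positivity) hr]
  have hexp : exp d ≤ 4 := by linarith [exp_le_exp.2 hd, exp_one_lt_three]
  linarith [mul_le_mul_of_nonneg_right hexp hr.le]

theorem stmt_11_general (hr0 : 0 < r) (hr : r ≤ π / 2) (hE : IsClosed E) (ht : t ∉ E)
    {fp fm : ℝ → ℝ} (hfp : Continuous fp) (hfps : HasCompactSupport fp) (hfp0 : 0 ≤ fp)
    (hfm : Continuous fm) (hfms : HasCompactSupport fm) (hfm0 : 0 ≤ fm)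
    {u : ℂ → ℝ} (hu : HarmonicOnSet u (slitStrip r E))
    (huc : ContinuousOn u (closure (slitStrip r E)))
    (hub : BddAbove (u '' closure (slitStrip r E)))
    (hup : ∀ x : ℝ, u (x + r * Complex.I) ≤ fp x) (hum : ∀ x : ℝ, u (x - r * Complex.I) ≤ fm x)
    (hslit : ∀ x ∈ E, u (x : ℂ) ≤ 0) :
    u t ≤ ∫ x, (fp x + fm x) * (exp (infDist t E) / (2 * r) * exp (-infDist x E)) := by
  have hkπ : |π / (2 * r)| / π = (2 * r)⁻¹ := by
    rw [abs_of_pos (by positivity)]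
    field_simp
  have hk : 1 ≤ |π / (2 * r)| := by
    rw [abs_of_pos (by positivity), one_le_div (by positivity)]
    linarith
  have hmem : (t : ℂ) ∈ slitStrip r E := ⟨by simpa using hr0, by simpa using ht⟩
  have hcomp : u t ≤ stripExtension (π / (2 * r)) fp t + stripExtension (-(π / (2 * r))) fm t := by
    refine hu.le_stripExtension hr0 (isOpen_slitStrip hE) sdiff_subset huc hub hfp hfps hfp0 hfm
      hfms hfm0 (fun z _ hz ↦ ?_) (fun z _ hz ↦ ?_) (fun z hz hzr ↦ ?_) hmem
    · simpa [← hz] using hup z.re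
    · simpa [sub_eq_add_neg, ← neg_mul, ← Complex.ofReal_neg, ← hz] using hum z.re
    · obtain ⟨x, hx, rfl⟩ := mem_image_ofReal_of_mem_frontier_slitStrip hE hz hzr
      exact hslit x hx
  refine (hcomp.trans (add_le_add (stripExtension_ofReal_le hfp hfps hfp0 hk E t)
    (stripExtension_ofReal_le hfm hfms hfm0 (by rwa [abs_neg]) E t))).trans_eq ?_
  rw [abs_neg, hkπ, ← integral_add (integrable_mul_exp_neg_infDist hfp hfps _ E)
    (integrable_mul_exp_neg_infDist hfm hfms _ E)]
  simp_rw [add_mul, div_eq_inv_mul]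

end SlitStrip

/-- Harmonic measure upper bound on the boundary lines of a slit strip: the density of
the harmonic measure of S = {|Im z| < r} \ I₀ at a real point t with d(t,I₀) ≤ 1, with
respect to arclength on the lines {Im z = ±r}, is at most (2/r)·exp(−d(x,I₀)). This is
expressed by pairing against arbitrary continuous boundary data vanishing on the slit. -/
theorem stmt_11 (r a b : ℝ) (hr : r ∈ Set.Ioo (0 : ℝ) 1)
    (hab : 0 < b - a) (hab1 : b - a ≤ 1)
    (S : Set ℂ) (hS : S = {z : ℂ | |z.im| < r} \ (Complex.ofReal '' Set.Icc a b))
    (t : ℝ) (ht : (t : ℂ) ∈ S) (htd : Metric.infDist t (Set.Icc a b) ≤ 1)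
    (fp fm : ℝ → ℝ) (hfpc : Continuous fp) (hfmc : Continuous fm)
    (hfp0 : ∀ x, 0 ≤ fp x) (hfm0 : ∀ x, 0 ≤ fm x)
    (hfps : HasCompactSupport fp) (hfms : HasCompactSupport fm)
    (u : ℂ → ℝ) (hu : HarmonicOnSet u S)
    (hucont : ContinuousOn u (closure S))
    (hubdd : ∃ Cu : ℝ, ∀ z ∈ closure S, |u z| ≤ Cu)
    (hbp : ∀ x : ℝ, u ((x : ℂ) + (r : ℂ) * Complex.I) = fp x)
    (hbm : ∀ x : ℝ, u ((x : ℂ) - (r : ℂ) * Complex.I) = fm x)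
    (hslit : ∀ x ∈ Set.Icc a b, u (x : ℂ) = 0) :
    u (t : ℂ) ≤
      ∫ x : ℝ, (fp x + fm x) *
        ((2 / r) * Real.exp (-(Metric.infDist x (Set.Icc a b)))) := by
  subst hS
  have hbound := stmt_11_general hr.1 (by linarith [pi_gt_three, hr.2]) isClosed_Icc
    (fun h ↦ ht.2 ⟨t, h, rfl⟩) hfpc hfps hfp0 hfmc hfms hfm0 hu hucont
    (hubdd.imp fun C hC ↦ forall_mem_image.2 fun z hz ↦ (le_abs_self _).trans (hC z hz))
    (fun x ↦ (hbp x).le) (fun x ↦ (hbm x).le) fun x hx ↦ (hslit x hx).le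
  exact hbound.trans (integral_mul_const_mul_mono (fun x ↦ add_nonneg (hfp0 x) (hfm0 x))
    (fun x ↦ (exp_pos _).le) (exp_div_two_mul_le htd hr.1))
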